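/- Let Γ ⊂ PSL(3,ℂ) be a discrete group and let Ω ⊆ ℙ²_ℂ be either Eq(Γ), the Kulkarni discontinuity region Ω(Γ), or a maximal open set on which Γ acts properly discontinuously, with 4 ≤ LiG(Ω) < ∞. Let ℒ be a family of complex lines in general position contained in ℙ²_ℂ∖Ω with card(ℒ) = LiG(Ω). Then ℒ has at least one vertex, and for every vertex v of ℒ the isotropy subgroup Isot(v, Γ) = {γ ∈ Γ : γ(v) = v} has finite index in Γ. -/

import Mathlib

/-!
A projective transformation preserving each of four lines in general position is trivial: every one
of the lines contains three fixed crossings, so a lift to `SL(3,ℂ)` is a scalar on each of the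
corresponding planes. Since `Γ` permutes the lines in `ℙ²_ℂ ∖ Ω`, finitely many such lines would
force `Γ` to be finite and hence `Ω = ℙ²_ℂ`; so there are infinitely many.

By maximality of `ℒ`, each line in `ℙ²_ℂ ∖ Ω` passes through a crossing of `ℒ`, since otherwise it
could be added to `ℒ`. There are finitely many crossings, so infinitely many of the lines pass
through one of them, which is then a vertex. Conversely, a point `p` on infinitely many lines in
`ℙ²_ℂ ∖ Ω` is itself a crossing, since only one of these lines joins `p` to any other point. Hence
the points on infinitely many lines in `ℙ²_ℂ ∖ Ω` form a finite `Γ`-invariant set, and it contains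
all the vertices.
-/

open scoped LinearAlgebra.Projectivization
open Projectivization Matrix Topology

noncomputable section

abbrev V3 : Type := Fin 3 → ℂ
abbrev SL3 := Matrix.SpecialLinearGroup (Fin 3) ℂ
abbrev PSL3 := SL3 ⧸ Subgroup.center SL3
abbrev P2 := ℙ ℂ V3

instance : TopologicalSpace P2 := instTopologicalSpaceQuotient

/-- The action of `SL(3,ℂ)` on `ℙ²_ℂ`. -/
def smulP2 (A : SL3) : P2 → P2 :=
  Projectivization.map ((Matrix.SpecialLinearGroup.toLin' A : V3 ≃ₗ[ℂ] V3) : V3 →ₗ[ℂ] V3)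
    (Matrix.SpecialLinearGroup.toLin' A).injective

lemma smulP2_mk (A : SL3) (v : V3) (hv : v ≠ 0) :
    smulP2 A (Projectivization.mk ℂ v hv) =
      Projectivization.mk ℂ (Matrix.SpecialLinearGroup.toLin' A v)
        ((Matrix.SpecialLinearGroup.toLin' A).map_ne_zero_iff.mpr hv) := rfl

lemma smulP2_one : smulP2 (1 : SL3) = id := by
  funext x
  induction x using Projectivization.ind with
  | h v hv => simp [smulP2_mk]

lemma smulP2_mul (A B : SL3) : smulP2 (A * B) = smulP2 A ∘ smulP2 B := by
  funext x
  induction x using Projectivization.ind with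
  | h v hv =>
    simp only [smulP2_mk, Function.comp_apply, _root_.map_mul]
    rfl

lemma continuous_smulP2 (A : SL3) : Continuous (smulP2 A) := by
  unfold smulP2 Projectivization.map
  exact Continuous.quotient_map'
    ((((Matrix.SpecialLinearGroup.toLin' A : V3 ≃ₗ[ℂ] V3) :
        V3 →ₗ[ℂ] V3).continuous_of_finiteDimensional.comp
      continuous_subtype_val).subtype_mk _) _
lemma smulP2_center (A : SL3) (hA : A ∈ Subgroup.center SL3) : smulP2 A = id := by
  obtain ⟨r, hr3, hrA⟩ := Matrix.SpecialLinearGroup.mem_center_iff.mp hA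
  have hr0 : r ≠ 0 := by
    intro h
    rw [h] at hr3
    simp at hr3
  funext x
  induction x using Projectivization.ind with
  | h v hv =>
    have hAv : Matrix.SpecialLinearGroup.toLin' A v = r • v := by
      rw [Matrix.SpecialLinearGroup.toLin'_apply]
      have : ((A : Matrix (Fin 3) (Fin 3) ℂ)) = Matrix.scalar (Fin 3) r := by
        rw [← hrA]
      rw [this]
      funext i
      simp [Matrix.toLin'_apply, Matrix.scalar, Matrix.mulVec_diagonal]
  
    simp only [smulP2_mk, id_eq]
    rw [Projectivization.mk_eq_mk_iff]
    exact ⟨Units.mk0 r hr0, by simp [hAv]⟩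

/-- The action of `SL(3,ℂ)` on `ℙ²` as a homomorphism into permutations. -/
def slPerm : SL3 →* Equiv.Perm P2 where
  toFun A :=
    { toFun := smulP2 A
      invFun := smulP2 A⁻¹
      left_inv := fun x => by
        have := (smulP2_mul A⁻¹ A).symm
        simp only [inv_mul_cancel, smulP2_one] at this
        exact congrFun this x
      right_inv := fun x => by
        have := (smulP2_mul A A⁻¹).symm
        simp only [mul_inv_cancel, smulP2_one] at this
        exact congrFun this x }
  map_one' := by
    ext x
    simp [smulP2_one]
  map_mul' A B := by
    ext x
    simp [smulP2_mul]

/-- The action of `PSL(3,ℂ)` on `ℙ²` as a homomorphism into permutations. -/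
def actHom : PSL3 →* Equiv.Perm P2 :=
  QuotientGroup.lift (Subgroup.center SL3) slPerm (by
    intro A hA
    ext x
    simpa [slPerm] using congrFun (smulP2_center A hA) x)

/-- The action of an element of `PSL(3,ℂ)` on `ℙ²`. -/
def pact (g : PSL3) : P2 → P2 := actHom g

instance : MulAction PSL3 P2 where
  smul g x := pact g x
  one_smul x := by
    show pact 1 x = x
    simp [pact]
  mul_smul g h x := by
    show pact (g * h) x = pact g (pact h x)
    simp [pact]

lemma pact_mk (A : SL3) : pact ((QuotientGroup.mk A : PSL3)) = smulP2 A := by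
  funext x
  simp [pact, actHom, slPerm]

lemma continuous_pact (g : PSL3) : Continuous (pact g) := by
  obtain ⟨A, rfl⟩ := QuotientGroup.mk_surjective g
  rw [pact_mk]
  exact continuous_smulP2 A

/-- The action of an element of `PSL(3,ℂ)` on `ℙ²`, as a continuous map. -/
def pactCM (g : PSL3) : C(P2, P2) := ⟨pact g, continuous_pact g⟩
instance : TopologicalSpace SL3 := instTopologicalSpaceSubtype

/-- A complex line in `ℙ²_ℂ`: the set of points whose representing vectors lie in
a fixed 2-dimensional complex linear subspace of `ℂ³`. -/
def IsLine (ℓ : Set P2) : Prop :=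
  ∃ W : Submodule ℂ V3, Module.finrank ℂ W = 2 ∧ ℓ = {p : P2 | p.submodule ≤ W}

/-- The set of complex lines contained in a given subset of `ℙ²_ℂ`. -/
def linesIn (S : Set P2) : Set (Set P2) := {ℓ | IsLine ℓ ∧ ℓ ⊆ S}

/-- A family of lines is in general position if no point lies on three
(pairwise distinct) lines of the family. -/
def InGenPos (L : Set (Set P2)) : Prop :=
  ∀ p : P2, ∀ ℓ₁ ∈ L, ∀ ℓ₂ ∈ L, ∀ ℓ₃ ∈ L,
    p ∈ ℓ₁ → p ∈ ℓ₂ → p ∈ ℓ₃ → ℓ₁ = ℓ₂ ∨ ℓ₁ = ℓ₃ ∨ ℓ₂ = ℓ₃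

/-- The families of complex lines in general position contained in the complement of `Ω`. -/
def genFamilies (Ω : Set P2) : Set (Set (Set P2)) :=
  {L | (∀ ℓ ∈ L, IsLine ℓ ∧ ℓ ⊆ Ωᶜ) ∧ InGenPos L}

/-- `Li Ω` : the number (in `ℕ∞`) of complex lines contained in the complement of `Ω`. -/
def Li (Ω : Set P2) : ℕ∞ := (linesIn Ωᶜ).encard

/-- `LiG Ω` : the maximal number (in `ℕ∞`) of complex lines in general position contained
in the complement of `Ω`. -/
def LiG (Ω : Set P2) : ℕ∞ := ⨆ L ∈ genFamilies Ω, L.encard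

/-- `Γ` acts properly discontinuously on the nonempty open invariant set `Ω`. -/
def ActsPropDiscOn (Γ : Subgroup PSL3) (Ω : Set P2) : Prop :=
  Ω.Nonempty ∧ IsOpen Ω ∧ (∀ γ ∈ Γ, pact γ '' Ω = Ω) ∧
    ∀ K : Set P2, K ⊆ Ω → IsCompact K →
      {γ : PSL3 | γ ∈ Γ ∧ ((pact γ '' K) ∩ K).Nonempty}.Finite

/-- `Ω` is a maximal open set on which `Γ` acts properly discontinuously. -/
def MaxDisc (Γ : Subgroup PSL3) (Ω : Set P2) : Prop :=
  ActsPropDiscOn Γ Ω ∧ ∀ Ω' : Set P2, ActsPropDiscOn Γ Ω' → Ω ⊆ Ω' → Ω' = Ω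

/-- `L0 Γ` : the closure of the set of points with infinite isotropy group. -/
def L0 (Γ : Subgroup PSL3) : Set P2 :=
  closure {z : P2 | {γ : PSL3 | γ ∈ Γ ∧ pact γ z = z}.Infinite}

/-- The cluster points of the orbit `Γ z`. -/
def orbitCluster (Γ : Subgroup PSL3) (z : P2) : Set P2 :=
  {w : P2 | ∀ U ∈ nhds w, {γ : PSL3 | γ ∈ Γ ∧ pact γ z ∈ U}.Infinite}

/-- The cluster points of `Γ K` for a set `K`. -/
def setCluster (Γ : Subgroup PSL3) (K : Set P2) : Set P2 :=
  {w : P2 | ∀ U ∈ nhds w, {γ : PSL3 | γ ∈ Γ ∧ ((pact γ '' K) ∩ U).Nonempty}.Infinite}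

/-- `L1 Γ` : the closure of the set of cluster points of orbits `Γ z`, `z ∉ L0 Γ`. -/
def L1 (Γ : Subgroup PSL3) : Set P2 :=
  closure (⋃ z ∈ (L0 Γ)ᶜ, orbitCluster Γ z)

/-- `L2 Γ` : the closure of the set of cluster points of `Γ K`,
`K` a compact subset of `ℙ²_ℂ ∖ (L0 Γ ∪ L1 Γ)`. -/
def L2 (Γ : Subgroup PSL3) : Set P2 :=
  closure (⋃ K ∈ {K : Set P2 | IsCompact K ∧ K ⊆ (L0 Γ ∪ L1 Γ)ᶜ}, setCluster Γ K)

/-- The Kulkarni limit set `Λ(Γ)`. -/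
def kulkarniLimit (Γ : Subgroup PSL3) : Set P2 := L0 Γ ∪ L1 Γ ∪ L2 Γ

/-- The Kulkarni discontinuity region `Ω(Γ)`. -/
def kulkarniRegion (Γ : Subgroup PSL3) : Set P2 := (kulkarniLimit Γ)ᶜ

/-- `C(Γ)` : the closure of the union of the Kulkarni limit sets of the cyclic
subgroups generated by the elements of `Γ`. -/
def CSet (Γ : Subgroup PSL3) : Set P2 :=
  closure (⋃ γ ∈ Γ, kulkarniLimit (Subgroup.zpowers γ))

/-- The equicontinuity set of `Γ` : points having a neighborhood `U` on which the
restrictions of the elements of `Γ` form a normal family, i.e. a relatively compact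
subset of `C(U, ℙ²_ℂ)` for the compact-open topology. -/
def eqSet (Γ : Subgroup PSL3) : Set P2 :=
  {z : P2 | ∃ U : Set P2, IsOpen U ∧ z ∈ U ∧
    IsCompact (closure {f : C(U, P2) | ∃ γ ∈ Γ, f = (pactCM γ).restrict U})}

/-- A vertex of a family `L` of lines lying in the complement of `Ω`. -/
def IsVertex (Ω : Set P2) (L : Set (Set P2)) (v : P2) : Prop :=
  ∃ ℓ₁ ∈ L, ∃ ℓ₂ ∈ L, ℓ₁ ≠ ℓ₂ ∧ ∃ C : Set (Set P2), C.Infinite ∧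
    (∀ ℓ ∈ C, IsLine ℓ ∧ ℓ ⊆ Ωᶜ) ∧ ℓ₁ ∩ ℓ₂ ∩ ⋂₀ C = {v}

open Classical

/-- Projection from the point `p` onto the line determined by `W` : `projPt p W x` is
the intersection point of the line through `p` and `x` with the line determined by `W`
(junk value if it is not unique). -/
def projPt (p : P2) (W : Submodule ℂ V3) (x : P2) : P2 :=
  if h : ∃ y : P2, y.submodule ≤ W ∧ y.submodule ≤ p.submodule ⊔ x.submodule
  then h.choose else x

open MulAction

section IncidenceStructure

open scoped Pointwise

variable {α : Type*} {L 𝓛 : Set (Set α)} {F : Set α}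

/-- The points at which two distinct members of a family of subsets ("lines") meet. -/
def crossings (L : Set (Set α)) : Set α := ⋃ t ∈ L.offDiag, t.1 ∩ t.2

/-- The centers of the infinite pencils in a family of subsets ("lines"): the points lying on
infinitely many members. -/
def pencilCenters (𝓛 : Set (Set α)) : Set α := {p | {ℓ ∈ 𝓛 | p ∈ ℓ}.Infinite}

lemma mem_crossings {p : α} :
    p ∈ crossings L ↔ ∃ ℓ ∈ L, ∃ m ∈ L, ℓ ≠ m ∧ p ∈ ℓ ∧ p ∈ m := by
  simp only [crossings, Set.mem_iUnion, Set.mem_offDiag, Set.mem_inter_iff, Prod.exists,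
    exists_prop]
  grind

lemma crossings_finite (hL : L.Pairwise fun ℓ m ↦ (ℓ ∩ m).Subsingleton) (hfin : L.Finite) :
    (crossings L).Finite :=
  hfin.offDiag.biUnion fun _ ht ↦ (hL ht.1 ht.2.1 ht.2.2).finite

lemma pencilCenters_subset_of_forall_inter_nonempty
    (h𝓛 : 𝓛.Pairwise fun ℓ m ↦ (ℓ ∩ m).Subsingleton) (hF : F.Finite)
    (hmeet : ∀ ℓ ∈ 𝓛, (ℓ ∩ F).Nonempty) : pencilCenters 𝓛 ⊆ F := by
  intro p hp
  by_contra hpF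
  have hfin : (⋃ q ∈ F, {ℓ ∈ 𝓛 | p ∈ ℓ ∧ q ∈ ℓ}).Finite := by
    refine hF.biUnion fun q hq ↦ Set.Subsingleton.finite fun ℓ hℓ m hm ↦ ?_
    by_contra hne
    exact hpF (h𝓛 hℓ.1 hm.1 hne ⟨hℓ.2.1, hm.2.1⟩ ⟨hℓ.2.2, hm.2.2⟩ ▸ hq)
  refine hp (hfin.subset fun ℓ ⟨hℓ, hpℓ⟩ ↦ ?_)
  obtain ⟨q, hqℓ, hq⟩ := hmeet ℓ hℓ
  exact Set.mem_biUnion hq ⟨hℓ, hpℓ, hqℓ⟩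

lemma exists_mem_pencilCenters_of_infinite (h𝓛 : 𝓛.Infinite) (hF : F.Finite)
    (hmeet : ∀ ℓ ∈ 𝓛, (ℓ ∩ F).Nonempty) : ∃ p ∈ F, p ∈ pencilCenters 𝓛 := by
  by_contra! hfin
  refine h𝓛 ((hF.biUnion fun p hp ↦ Set.not_infinite.mp (hfin p hp)).subset fun ℓ hℓ ↦ ?_)
  obtain ⟨p, hpℓ, hp⟩ := hmeet ℓ hℓ
  exact Set.mem_biUnion hp ⟨hℓ, hpℓ⟩

variable {G : Type*} [Group G] [MulAction G α]

lemma fixingSubgroup_le_fixingSubgroup_crossings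
    (hL : L.Pairwise fun ℓ m ↦ (ℓ ∩ m).Subsingleton) :
    fixingSubgroup G L ≤ fixingSubgroup G (crossings L) := by
  simp only [SetLike.le_def, mem_fixingSubgroup_iff, mem_crossings]
  rintro g hg p ⟨ℓ, hℓ, m, hm, hne, hpℓ, hpm⟩
  exact hL hℓ hm hne
    ⟨hg ℓ hℓ ▸ Set.smul_mem_smul_set hpℓ, hg m hm ▸ Set.smul_mem_smul_set hpm⟩ ⟨hpℓ, hpm⟩

lemma stabilizer_le_stabilizer_pencilCenters :
    stabilizer G 𝓛 ≤ stabilizer G (pencilCenters 𝓛) := by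
  refine fun g hg ↦ mem_stabilizer_set.mpr fun p ↦ ?_
  have hpencil : {ℓ ∈ 𝓛 | g • p ∈ ℓ} = g • {ℓ ∈ 𝓛 | p ∈ ℓ} := by
    ext ℓ
    rw [Set.mem_smul_set_iff_inv_smul_mem, Set.mem_ofPred_eq, Set.mem_ofPred_eq,
      Set.mem_inv_smul_set_iff, mem_stabilizer_set.mp (inv_mem hg)]
  rw [pencilCenters, Set.mem_ofPred_eq, Set.mem_ofPred_eq, hpencil, Set.infinite_smul_set]

end IncidenceStructure

section GroupAction

open scoped Pointwise

variable {G α : Type*} [Group G] [MulAction G α] {Γ : Subgroup G} {s : Set α}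

lemma finiteIndex_stabilizer_of_mem (hs : s.Finite) (hΓ : Γ ≤ stabilizer G s) {x : α}
    (hx : x ∈ s) : (stabilizer Γ x).FiniteIndex := by
  have horbit : (orbit Γ x).Finite := by
    refine hs.subset ?_
    rintro _ ⟨γ, rfl⟩
    exact (mem_stabilizer_set.mp (hΓ γ.2) x).mpr hx
  exact ⟨index_stabilizer Γ x ▸ Set.ncard_ne_zero_of_mem (mem_orbit_self x) horbit⟩

lemma finite_of_fixingSubgroup_eq_bot (hs : s.Finite) (hΓ : Γ ≤ stabilizer G s)
    (hfix : fixingSubgroup G s = ⊥) : Finite Γ := by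
  have := hs.to_subtype
  refine Finite.of_injective
    (fun γ : Γ ↦ toPerm (α := stabilizer G s) (β := s) ⟨γ, hΓ γ.2⟩) fun γ δ hγδ ↦ ?_
  have hmem : (δ : G)⁻¹ * γ ∈ fixingSubgroup G s := by
    refine (mem_fixingSubgroup_iff G).mpr fun x hx ↦ ?_
    rw [mul_smul, inv_smul_eq_iff]
    exact congrArg Subtype.val (DFunLike.congr_fun hγδ ⟨x, hx⟩)
  rw [hfix, Subgroup.mem_bot, inv_mul_eq_one] at hmem
  exact Subtype.ext hmem.symm

lemma le_stabilizer_iUnion {ι : Sort*} {t : ι → Set α} (h : ∀ i, Γ ≤ stabilizer G (t i)) :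
    Γ ≤ stabilizer G (⋃ i, t i) := fun g hg ↦ by
  rw [mem_stabilizer_iff, Set.smul_set_iUnion]
  exact Set.iUnion_congr fun i ↦ h i hg

lemma le_stabilizer_union {t : Set α} (hs : Γ ≤ stabilizer G s) (ht : Γ ≤ stabilizer G t) :
    Γ ≤ stabilizer G (s ∪ t) :=
  (le_inf hs ht).trans stabilizer_inf_stabilizer_le_stabilizer_union

lemma stabilizer_le_stabilizer_closure [TopologicalSpace α] [ContinuousConstSMul G α] :
    stabilizer G s ≤ stabilizer G (closure s) := fun g hg ↦ by
  rw [mem_stabilizer_iff, ← closure_smul, mem_stabilizer_iff.mp hg]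

end GroupAction

section ProjectiveLines

variable {K V : Type*} [Field K] [AddCommGroup V] [Module K V] {W : Submodule K V}

lemma eq_sup_submodule_of_finrank_eq_two (hW : Module.finrank K W = 2) {p q : ℙ K V}
    (hpq : p ≠ q) (hp : p.submodule ≤ W) (hq : q.submodule ≤ W) :
    W = p.submodule ⊔ q.submodule := by
  have : FiniteDimensional K W := Module.finite_of_finrank_eq_succ hW
  have hlt : p.submodule < p.submodule ⊔ q.submodule := by
    refine left_lt_sup.mpr fun hle ↦ hpq (submodule_injective ?_).symm
    exact Submodule.eq_of_le_of_finrank_eq hle (by simp only [finrank_submodule])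
  have hfinrank := Submodule.finrank_lt_finrank_of_lt hlt
  rw [finrank_submodule] at hfinrank
  exact (Submodule.eq_of_le_of_finrank_le (sup_le hp hq) (by lia)).symm

lemma exists_submodule_le_of_ne_bot (hW : W ≠ ⊥) : ∃ p : ℙ K V, p.submodule ≤ W := by
  obtain ⟨v, hv, hv0⟩ := Submodule.exists_mem_ne_zero_of_ne_bot hW
  exact ⟨mk K v hv0, by rwa [submodule_mk, Submodule.span_singleton_le_iff_mem]⟩

lemma isCoatom_of_finrank_add_one_eq (hW : Module.finrank K W + 1 = Module.finrank K V) :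
    IsCoatom W := by
  have : FiniteDimensional K V := Module.finite_of_finrank_pos (by lia)
  refine ⟨?_, fun U hU ↦ ?_⟩
  · rintro rfl
    simp at hW
  · have := Submodule.finrank_lt_finrank_of_lt hU
    exact Submodule.eq_top_of_finrank_eq (le_antisymm U.finrank_le (by lia))

variable {f : V →ₗ[K] V} {hf : Function.Injective f}

lemma exists_submodule_le_eigenspace_of_map_eq_self {p : ℙ K V} (hp : map f hf p = p) :
    ∃ c, p.submodule ≤ Module.End.eigenspace f c := by
  induction p using Projectivization.ind with
  | h v hv =>
    obtain ⟨c, hc⟩ := (mk_eq_mk_iff' K _ _ _ hv).mp hp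
    exact ⟨c, by simpa using hc.symm⟩

/-- If the eigenvalue at `r` differed from those at `p` and `q`, then `r ≤ W = p ⊔ q` would
contradict the independence of eigenspaces. Hence two of the points lie in one eigenspace, and they
span `W`. -/
lemma exists_le_eigenspace_of_map_eq_self (hW : Module.finrank K W = 2) {p q r : ℙ K V}
    (hpq : p ≠ q) (hpr : p ≠ r) (hqr : q ≠ r) (hp : p.submodule ≤ W) (hq : q.submodule ≤ W)
    (hr : r.submodule ≤ W) (hfp : map f hf p = p) (hfq : map f hf q = q) (hfr : map f hf r = r) :
    ∃ c, W ≤ Module.End.eigenspace f c := by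
  obtain ⟨a, ha⟩ := exists_submodule_le_eigenspace_of_map_eq_self hfp
  obtain ⟨b, hb⟩ := exists_submodule_le_eigenspace_of_map_eq_self hfq
  obtain ⟨c, hc⟩ := exists_submodule_le_eigenspace_of_map_eq_self hfr
  refine ⟨c, ?_⟩
  rcases eq_or_ne a c with rfl | hac
  · exact (eq_sup_submodule_of_finrank_eq_two hW hpr hp hr).trans_le (sup_le ha hc)
  rcases eq_or_ne b c with rfl | hbc
  · exact (eq_sup_submodule_of_finrank_eq_two hW hqr hq hr).trans_le (sup_le hb hc)
  have hsup : r.submodule ≤ ⨆ d ≠ c, Module.End.eigenspace f d :=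
    (hr.trans_eq (eq_sup_submodule_of_finrank_eq_two hW hpq hp hq)).trans
      (sup_le (ha.trans (le_iSup₂_of_le a hac le_rfl)) (hb.trans (le_iSup₂_of_le b hbc le_rfl)))
  have hbot : r.submodule = ⊥ :=
    le_bot_iff.mp (Module.End.eigenspaces_iSupIndep f c hc hsup)
  exact absurd hbot (Submodule.one_le_finrank_iff.mp r.finrank_submodule.ge)

lemma mem_center_of_eigenspace_eq_top {n R : Type*} [Fintype n] [DecidableEq n] [CommRing R]
    {A : Matrix.SpecialLinearGroup n R} {c : R}
    (hA : Module.End.eigenspace (A.toLin' : (n → R) →ₗ[R] (n → R)) c = ⊤) :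
    A ∈ Subgroup.center (Matrix.SpecialLinearGroup n R) := by
  have hsmul (x : n → R) : A.toLin' x = c • x :=
    Module.End.mem_eigenspace_iff.mp (hA ▸ Submodule.mem_top)
  refine Subgroup.mem_center_iff.mpr fun B ↦ Matrix.SpecialLinearGroup.toLin'_injective ?_
  ext1 x
  simp only [_root_.map_mul, LinearEquiv.mul_apply, hsmul, map_smul]

end ProjectiveLines

section ComplexLines

open scoped Pointwise

variable {ℓ m : Set P2}

instance : ContinuousConstSMul PSL3 P2 := ⟨continuous_pact⟩

lemma submodule_mk_smul (A : SL3) (p : P2) :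
    ((A : PSL3) • p).submodule = p.submodule.map A.toLin'.toLinearMap := by
  change (pact (A : PSL3) p).submodule = _
  induction p using Projectivization.ind with
  | h v hv => simp [pact_mk, smulP2_mk, Submodule.map_span]

lemma IsLine.smul (g : PSL3) (hℓ : IsLine ℓ) : IsLine (g • ℓ) := by
  obtain ⟨W, hW, rfl⟩ := hℓ
  obtain ⟨A, rfl⟩ := QuotientGroup.mk_surjective g
  refine ⟨W.map A.toLin'.toLinearMap, by rw [LinearEquiv.finrank_map_eq, hW], ?_⟩
  ext q
  rw [Set.mem_smul_set_iff_inv_smul_mem, Set.mem_ofPred_eq, Set.mem_ofPred_eq,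
    ← Submodule.map_le_map_iff_of_injective A.toLin'.injective, ← submodule_mk_smul,
    smul_inv_smul]

lemma pairwise_isLine : {ℓ | IsLine ℓ}.Pairwise fun ℓ m ↦ (ℓ ∩ m).Subsingleton := by
  rintro _ ⟨W, hW, rfl⟩ _ ⟨W', hW', rfl⟩ hne p ⟨hp, hp'⟩ q ⟨hq, hq'⟩
  by_contra hpq
  refine hne ?_
  rw [eq_sup_submodule_of_finrank_eq_two hW hpq hp hq,
    eq_sup_submodule_of_finrank_eq_two hW' hpq hp' hq']

lemma IsLine.inter_nonempty (hℓ : IsLine ℓ) (hm : IsLine m) : (ℓ ∩ m).Nonempty := by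
  obtain ⟨W, hW, rfl⟩ := hℓ
  obtain ⟨W', hW', rfl⟩ := hm
  have hdim := Submodule.finrank_sup_add_finrank_inf_eq W W'
  have hle : Module.finrank ℂ ↥(W ⊔ W') ≤ 3 := by simpa using (W ⊔ W').finrank_le
  obtain ⟨p, hp⟩ := exists_submodule_le_of_ne_bot (W := W ⊓ W') fun hbot ↦ by
    rw [hbot, finrank_bot] at hdim
    lia
  exact ⟨p, le_inf_iff.mp hp⟩

lemma stabilizer_le_stabilizer_linesIn (S : Set P2) :
    stabilizer PSL3 S ≤ stabilizer PSL3 (linesIn S) := by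
  refine (le_stabilizer_iff_smul_le _ _).mpr fun g hg ↦ ?_
  rintro _ ⟨ℓ, ⟨hℓ, hℓS⟩, rfl⟩
  exact ⟨hℓ.smul g, (Set.smul_set_mono hℓS).trans_eq hg⟩

lemma ne_univ_of_linesIn_compl_nonempty {Ω : Set P2} (h : (linesIn Ωᶜ).Nonempty) :
    Ω ≠ Set.univ := by
  obtain ⟨ℓ, hℓ, hℓΩ⟩ := h
  obtain ⟨p, hp, -⟩ := hℓ.inter_nonempty hℓ
  exact (Set.ne_univ_iff_exists_notMem Ω).mpr ⟨p, hℓΩ hp⟩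

end ComplexLines

section GeneralPosition

open scoped Pointwise

variable {L : Set (Set P2)} {ℓ Ω : Set P2}

lemma InGenPos.encard_le_encard_inter_crossings_add_one (hL : InGenPos L)
    (hlines : ∀ ℓ ∈ L, IsLine ℓ) (hℓ : ℓ ∈ L) :
    L.encard ≤ (ℓ ∩ crossings L).encard + 1 := by
  choose! c hc using fun m hm ↦ (hlines ℓ hℓ).inter_nonempty (hlines m hm)
  rw [← Set.encard_sdiff_singleton_add_one hℓ]
  gcongr
  refine Set.encard_le_encard_of_injOn (f := c) (fun m hm ↦ ?_) fun m hm m' hm' hcc ↦ ?_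
  · exact ⟨(hc m hm.1).1,
      mem_crossings.mpr ⟨ℓ, hℓ, m, hm.1, Ne.symm hm.2, hc m hm.1⟩⟩
  · have hm'c := hcc ▸ (hc m' hm'.1).2
    rcases hL (c m) ℓ hℓ m hm.1 m' hm'.1 (hc m hm.1).1 (hc m hm.1).2 hm'c with h | h | h
    exacts [absurd h.symm hm.2, absurd h.symm hm'.2, h]

/-- The other lines of `L` cut out at least three crossings on this one, and `A` fixes them. -/
lemma InGenPos.exists_le_eigenspace (hL : InGenPos L) (hlines : ∀ ℓ ∈ L, IsLine ℓ)
    (h4 : 4 ≤ L.encard) {A : SL3} (hA : (A : PSL3) ∈ fixingSubgroup PSL3 L) {W : Submodule ℂ V3}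
    (hW : Module.finrank ℂ W = 2) (hWL : {p : P2 | p.submodule ≤ W} ∈ L) :
    ∃ c, W ≤ Module.End.eigenspace A.toLin'.toLinearMap c := by
  have hcard : 3 ≤ ({p : P2 | p.submodule ≤ W} ∩ crossings L).encard :=
    (ENat.add_le_add_iff_right ENat.one_ne_top).mp (le_trans (by norm_num [h4])
      (hL.encard_le_encard_inter_crossings_add_one hlines hWL))
  obtain ⟨T, hT, hT3⟩ := Set.exists_subset_encard_eq hcard
  obtain ⟨p, q, r, hpq, hpr, hqr, rfl⟩ := Set.encard_eq_three.mp hT3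
  obtain ⟨hp, hq, hr⟩ : p ∈ _ ∧ q ∈ _ ∧ r ∈ _ := by
    simpa only [Set.insert_subset_iff, Set.singleton_subset_iff] using hT
  have hfix : ∀ x ∈ crossings L, smulP2 A x = x := by
    rw [← pact_mk]
    exact (mem_fixingSubgroup_iff PSL3).mp
      (fixingSubgroup_le_fixingSubgroup_crossings (pairwise_isLine.mono hlines) hA)
  exact exists_le_eigenspace_of_map_eq_self hW hpq hpr hqr hp.1 hq.1 hr.1
    (hfix p hp.2) (hfix q hq.2) (hfix r hr.2)

lemma InGenPos.fixingSubgroup_eq_bot (hL : InGenPos L) (hlines : ∀ ℓ ∈ L, IsLine ℓ)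
    (h4 : 4 ≤ L.encard) : fixingSubgroup PSL3 L = ⊥ := by
  refine eq_bot_iff.mpr fun g hg ↦ ?_
  obtain ⟨A, rfl⟩ := QuotientGroup.mk_surjective g
  obtain ⟨ℓ, hℓ, m, hm, hne⟩ :=
    Set.one_lt_encard_iff_nontrivial.mp (lt_of_lt_of_le (by norm_num) h4)
  obtain ⟨p, hpℓ, hpm⟩ := (hlines ℓ hℓ).inter_nonempty (hlines m hm)
  obtain ⟨W, hW, rfl⟩ := hlines ℓ hℓ
  obtain ⟨W', hW', rfl⟩ := hlines m hm
  obtain ⟨c, hc⟩ := hL.exists_le_eigenspace hlines h4 hg hW hℓ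
  obtain ⟨c', hc'⟩ := hL.exists_le_eigenspace hlines h4 hg hW' hm
  obtain rfl : c = c' := by
    by_contra hcc
    have hdisj := (Module.End.eigenspaces_iSupIndep A.toLin'.toLinearMap).pairwiseDisjoint hcc
    exact Submodule.one_le_finrank_iff.mp p.finrank_submodule.ge
      (le_bot_iff.mp (hdisj (hpℓ.trans hc) (hpm.trans hc')))
  have htop : W ⊔ W' = ⊤ :=
    IsCoatom.sup_eq_top_of_ne (isCoatom_of_finrank_add_one_eq (by simp [hW]))
      (isCoatom_of_finrank_add_one_eq (by simp [hW'])) (fun h ↦ hne (by rw [h]))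
  rw [Subgroup.mem_bot, QuotientGroup.eq_one_iff]
  exact mem_center_of_eigenspace_eq_top (top_le_iff.mp (htop ▸ sup_le hc hc'))

lemma InGenPos.insert (hL : InGenPos L) (hℓ : Disjoint ℓ (crossings L)) :
    InGenPos (insert ℓ L) := by
  have hℓL : ∀ p ∈ ℓ, ∀ m₁ ∈ L, ∀ m₂ ∈ L, p ∈ m₁ → p ∈ m₂ → m₁ = m₂ := by
    intro p hp m₁ hm₁ m₂ hm₂ hp₁ hp₂
    by_contra hne
    exact Set.disjoint_left.mp hℓ hp (mem_crossings.mpr ⟨m₁, hm₁, m₂, hm₂, hne, hp₁, hp₂⟩)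
  rintro p a (rfl | ha) b (rfl | hb) c (rfl | hc) hpa hpb hpc <;> grind [InGenPos]

lemma maximal_of_encard_eq_LiG (hL : L ∈ genFamilies Ω) (hcard : L.encard = LiG Ω)
    (hfin : L.Finite) : Maximal (· ∈ genFamilies Ω) L :=
  ⟨hL, fun M hM hLM ↦ (hfin.eq_of_subset_of_encard_le hLM
    (hcard ▸ le_iSup₂ (f := fun (N : Set (Set P2)) (_ : N ∈ genFamilies Ω) ↦ N.encard) M hM)).ge⟩

lemma inter_crossings_nonempty_of_maximal (hL : Maximal (· ∈ genFamilies Ω) L)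
    (hnontriv : L.Nontrivial) (hℓ : ℓ ∈ linesIn Ωᶜ) : (ℓ ∩ crossings L).Nonempty := by
  by_cases hmem : ℓ ∈ L
  · obtain ⟨m, hm, hne⟩ := hnontriv.exists_ne ℓ
    obtain ⟨p, hpℓ, hpm⟩ := hℓ.1.inter_nonempty (hL.prop.1 m hm).1
    exact ⟨p, hpℓ, mem_crossings.mpr ⟨ℓ, hmem, m, hm, hne.symm, hpℓ, hpm⟩⟩
  · by_contra hdisj
    rw [← Set.not_disjoint_iff_nonempty_inter, not_not] at hdisj
    have hins : insert ℓ L ∈ genFamilies Ω :=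
      ⟨Set.forall_mem_insert.mpr ⟨hℓ, hL.prop.1⟩, hL.prop.2.insert hdisj⟩
    exact hmem (hL.le_of_ge hins (Set.subset_insert ℓ L) (Set.mem_insert ℓ L))

lemma isVertex_iff (hL : L.Pairwise fun ℓ m ↦ (ℓ ∩ m).Subsingleton) {v : P2} :
    IsVertex Ω L v ↔ v ∈ crossings L ∧ v ∈ pencilCenters (linesIn Ωᶜ) := by
  constructor
  · rintro ⟨ℓ, hℓ, m, hm, hne, C, hC, hCΩ, hv⟩
    obtain ⟨hvℓm, hvC⟩ : v ∈ ℓ ∩ m ∩ ⋂₀ C := hv ▸ rfl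
    exact ⟨mem_crossings.mpr ⟨ℓ, hℓ, m, hm, hne, hvℓm⟩, hC.mono fun k hk ↦ ⟨hCΩ k hk, hvC k hk⟩⟩
  · rintro ⟨hv, hpencil⟩
    obtain ⟨ℓ, hℓ, m, hm, hne, hvℓm⟩ := mem_crossings.mp hv
    refine ⟨ℓ, hℓ, m, hm, hne, _, hpencil, fun k hk ↦ hk.1, ?_⟩
    exact ((hL hℓ hm hne).anti Set.inter_subset_left).eq_singleton_of_mem
      ⟨hvℓm, fun k hk ↦ hk.2⟩

lemma linesIn_infinite {Γ : Subgroup PSL3} [Infinite Γ] {S : Set P2} (hS : Γ ≤ stabilizer PSL3 S)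
    (hL : InGenPos L) (hLS : L ⊆ linesIn S) (h4 : 4 ≤ L.encard) : (linesIn S).Infinite := by
  intro hfin
  have hfix : fixingSubgroup PSL3 (linesIn S) = ⊥ := by
    rw [← le_bot_iff, ← hL.fixingSubgroup_eq_bot (fun ℓ hℓ ↦ (hLS hℓ).1) h4]
    exact fixingSubgroup_antitone PSL3 (Set P2) hLS
  exact not_finite_iff_infinite.mpr ‹_›
    (finite_of_fixingSubgroup_eq_bot hfin (hS.trans (stabilizer_le_stabilizer_linesIn S)) hfix)

end GeneralPosition

section Invariance

open scoped Pointwise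

variable (Γ : Subgroup PSL3) {Ω : Set P2}

lemma le_stabilizer_L0 : Γ ≤ stabilizer PSL3 (L0 Γ) := by
  refine le_trans ((le_stabilizer_iff_smul_le _ _).mpr fun g hg ↦ ?_)
    stabilizer_le_stabilizer_closure
  rintro _ ⟨z, hz, rfl⟩
  refine (hz.image (MulAut.conj g).injective.injOn).mono ?_
  rintro _ ⟨δ, ⟨hδ, hδz⟩, rfl⟩
  refine ⟨Γ.mul_mem (Γ.mul_mem hg hδ) (Γ.inv_mem hg), ?_⟩
  change (g * δ * g⁻¹) • g • z = g • z
  rw [mul_smul, inv_smul_smul, mul_smul]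
  exact congrArg (g • ·) hδz

lemma le_stabilizer_setCluster (K : Set P2) : Γ ≤ stabilizer PSL3 (setCluster Γ K) := by
  refine (le_stabilizer_iff_smul_le _ _).mpr fun g hg ↦ ?_
  rintro _ ⟨w, hw, rfl⟩ U hU
  refine ((hw _ ((continuous_const_smul g).continuousAt hU)).image
    (mul_right_injective g).injOn).mono ?_
  rintro _ ⟨δ, ⟨hδ, _, ⟨x, hx, rfl⟩, hxU⟩, rfl⟩
  exact ⟨Γ.mul_mem hg hδ, _, ⟨x, hx, rfl⟩, Set.mem_of_eq_of_mem (mul_smul g δ x) hxU⟩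

lemma orbitCluster_eq_setCluster (z : P2) : orbitCluster Γ z = setCluster Γ {z} := by
  simp [orbitCluster, setCluster]

lemma le_stabilizer_kulkarniRegion : Γ ≤ stabilizer PSL3 (kulkarniRegion Γ) := by
  rw [kulkarniRegion, stabilizer_compl]
  refine le_stabilizer_union (le_stabilizer_union (le_stabilizer_L0 Γ) ?_) ?_
  · refine le_trans (le_stabilizer_iUnion fun z ↦ le_stabilizer_iUnion fun _ ↦ ?_)
      stabilizer_le_stabilizer_closure
    exact orbitCluster_eq_setCluster Γ z ▸ le_stabilizer_setCluster Γ {z}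
  · exact le_trans (le_stabilizer_iUnion fun K ↦ le_stabilizer_iUnion fun _ ↦
      le_stabilizer_setCluster Γ K) stabilizer_le_stabilizer_closure

/-- Precomposition with `g⁻¹` identifies the restrictions of elements of `Γ` to `U` with their
restrictions to `g • U`. -/
lemma le_stabilizer_eqSet : Γ ≤ stabilizer PSL3 (eqSet Γ) := by
  refine (le_stabilizer_iff_smul_le _ _).mpr fun g hg ↦ ?_
  rintro _ ⟨z, ⟨U, hU, hzU, hc⟩, rfl⟩
  let e : U ≃ₜ ↥(g • U) := (Homeomorph.smul g).image U
  let Φ : C(U, P2) ≃ₜ C(↥(g • U), P2) := e.arrowCongr (Homeomorph.refl P2)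
  refine ⟨g • U, hU.smul g, Set.smul_mem_smul_set hzU, ?_⟩
  refine (hc.image Φ.continuous).of_isClosed_subset isClosed_closure ?_
  rw [Φ.image_closure]
  refine closure_mono ?_
  rintro _ ⟨γ, hγ, rfl⟩
  refine ⟨_, ⟨γ * g, Γ.mul_mem hγ hg, rfl⟩, ?_⟩
  ext x
  change (γ * g) • (e.symm x : P2) = γ • (x : P2)
  rw [mul_smul]
  exact congrArg (γ • ·) (congrArg Subtype.val (e.apply_symm_apply x))

variable {Γ}

lemma MaxDisc.le_stabilizer (hΩ : MaxDisc Γ Ω) : Γ ≤ stabilizer PSL3 Ω := hΩ.1.2.2.1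

end Invariance

section FiniteGroups

variable (Γ : Subgroup PSL3) {Ω : Set P2}

instance : T1Space P2 := by
  refine ⟨fun p ↦ ?_⟩
  have hquot : IsQuotientMap (Projectivization.mk' ℂ : {v : V3 // v ≠ 0} → P2) :=
    isQuotientMap_quotient_mk'
  rw [← hquot.isClosed_preimage]
  have hpre : Projectivization.mk' ℂ ⁻¹' {p} =
      ((↑) : {v : V3 // v ≠ 0} → V3) ⁻¹' (p.submodule : Set V3) := by
    ext v
    induction p using Projectivization.ind with
    | h w hw =>
      simp only [Set.mem_preimage, Set.mem_singleton_iff, Projectivization.mk'_eq_mk,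
        Projectivization.mk_eq_mk_iff', submodule_mk, SetLike.mem_coe,
        Submodule.mem_span_singleton]
  exact hpre ▸ p.submodule.closed_of_finiteDimensional.preimage continuous_subtype_val

variable [Finite Γ]

lemma setCluster_eq_empty_of_finite (K : Set P2) : setCluster Γ K = ∅ :=
  Set.eq_empty_of_forall_notMem fun _ hw ↦ 
    hw Set.univ Filter.univ_mem ((Γ : Set PSL3).toFinite.sep _)

lemma kulkarniRegion_eq_univ_of_finite : kulkarniRegion Γ = Set.univ := by
  have hL0 : L0 Γ = ∅ := by
    rw [L0, closure_empty_iff]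
    exact Set.eq_empty_of_forall_notMem fun z hz ↦ hz ((Γ : Set PSL3).toFinite.sep _)
  simp [kulkarniRegion, kulkarniLimit, hL0, L1, L2, orbitCluster_eq_setCluster,
    setCluster_eq_empty_of_finite]

lemma eqSet_eq_univ_of_finite : eqSet Γ = Set.univ := by
  refine Set.eq_univ_of_forall fun z ↦ ⟨Set.univ, isOpen_univ, Set.mem_univ z, ?_⟩
  have hfin : {f : C(Set.univ, P2) | ∃ γ ∈ Γ, f = (pactCM γ).restrict Set.univ}.Finite := by
    refine ((Set.toFinite (Γ : Set PSL3)).image fun γ ↦ (pactCM γ).restrict Set.univ).subset ?_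
    rintro _ ⟨γ, hγ, rfl⟩
    exact Set.mem_image_of_mem _ hγ
  rw [hfin.isClosed.closure_eq]
  exact hfin.isCompact

variable {Γ}

lemma MaxDisc.eq_univ_of_finite (hΩ : MaxDisc Γ Ω) : Ω = Set.univ := by
  refine (hΩ.2 Set.univ ⟨?_, isOpen_univ, fun γ _ ↦ ?_, fun K _ _ ↦ ?_⟩ (Set.subset_univ Ω)).symm
  · exact hΩ.1.1.mono (Set.subset_univ Ω)
  · exact Set.image_univ_of_surjective (MulAction.surjective γ)
  · exact (Γ : Set PSL3).toFinite.sep _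

end FiniteGroups

section DiscontinuityRegions

open scoped Pointwise

variable {Γ : Subgroup PSL3} {Ω : Set P2}

/-- `Ω` is one of the regions classically attached to the action of `Γ`: its equicontinuity set,
its Kulkarni discontinuity region, or a maximal open set on which it acts properly
discontinuously. -/
def IsDiscontinuityRegion (Γ : Subgroup PSL3) (Ω : Set P2) : Prop :=
  Ω = eqSet Γ ∨ Ω = kulkarniRegion Γ ∨ MaxDisc Γ Ω

lemma IsDiscontinuityRegion.le_stabilizer (hΩ : IsDiscontinuityRegion Γ Ω) :
    Γ ≤ stabilizer PSL3 Ω := by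
  rcases hΩ with rfl | rfl | hΩ
  exacts [le_stabilizer_eqSet Γ, le_stabilizer_kulkarniRegion Γ, hΩ.le_stabilizer]

lemma IsDiscontinuityRegion.infinite_of_ne_univ (hΩ : IsDiscontinuityRegion Γ Ω)
    (hne : Ω ≠ Set.univ) : Infinite Γ := by
  by_contra hfin
  rw [not_infinite_iff_finite] at hfin
  rcases hΩ with rfl | rfl | hΩ
  exacts [hne (eqSet_eq_univ_of_finite Γ), hne (kulkarniRegion_eq_univ_of_finite Γ),
    hne hΩ.eq_univ_of_finite]

theorem exists_vertex_and_stabilizer_finite_index_general [Infinite Γ]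
    (hΩ : Γ ≤ stabilizer PSL3 Ω) {L : Set (Set P2)} (hL : Maximal (· ∈ genFamilies Ω) L)
    (hfin : L.Finite) (h4 : 4 ≤ L.encard) :
    (∃ v, IsVertex Ω L v) ∧ ∀ v, IsVertex Ω L v → (stabilizer Γ v).FiniteIndex := by
  have hpair := pairwise_isLine.mono fun ℓ hℓ ↦ (hL.prop.1 ℓ hℓ).1
  have hcross : (crossings L).Finite := crossings_finite hpair hfin
  have hnontriv : L.Nontrivial :=
    Set.one_lt_encard_iff_nontrivial.mp (lt_of_lt_of_le (by norm_num) h4)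
  have hmeet : ∀ ℓ ∈ linesIn Ωᶜ, (ℓ ∩ crossings L).Nonempty := fun ℓ hℓ ↦
    inter_crossings_nonempty_of_maximal hL hnontriv hℓ
  have hinv : Γ ≤ stabilizer PSL3 Ωᶜ := stabilizer_compl (G := PSL3) (s := Ω) ▸ hΩ
  simp only [isVertex_iff hpair]
  constructor
  · exact exists_mem_pencilCenters_of_infinite (linesIn_infinite hinv hL.prop.2 hL.prop.1 h4)
      hcross hmeet
  · rintro v ⟨-, hv⟩
    have hcenters : pencilCenters (linesIn Ωᶜ) ⊆ crossings L :=
      pencilCenters_subset_of_forall_inter_nonempty (pairwise_isLine.mono fun _ hℓ ↦ hℓ.1)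
        hcross hmeet
    exact finiteIndex_stabilizer_of_mem (hcross.subset hcenters) (hinv.trans
      ((stabilizer_le_stabilizer_linesIn Ωᶜ).trans stabilizer_le_stabilizer_pencilCenters)) hv

end DiscontinuityRegions

theorem exists_vertex_and_stabilizer_finite_index
    (Γ : Subgroup PSL3) (hΓ : DiscreteTopology ↥Γ) (Ω : Set P2)
    (hΩ : Ω = eqSet Γ ∨ Ω = kulkarniRegion Γ ∨ MaxDisc Γ Ω)
    (h4 : 4 ≤ LiG Ω) (hfin : LiG Ω ≠ ⊤)
    (L : Set (Set P2)) (hL : L ∈ genFamilies Ω) (hcard : L.encard = LiG Ω) :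
    (∃ v : P2, IsVertex Ω L v) ∧
    ∀ v : P2, IsVertex Ω L v → (MulAction.stabilizer ↥Γ v).FiniteIndex := by
  rw [← hcard] at h4 hfin
  have hLfin : L.Finite := Set.encard_ne_top_iff.mp hfin
  have hLne : L.Nonempty := Set.encard_pos.mp (lt_of_lt_of_le (by norm_num) h4)
  have hregion : IsDiscontinuityRegion Γ Ω := hΩ
  have := hregion.infinite_of_ne_univ (ne_univ_of_linesIn_compl_nonempty (hLne.mono hL.1))
  exact exists_vertex_and_stabilizer_finite_index_general hregion.le_stabilizer
    (maximal_of_encard_eq_LiG hL hcard hLfin) hLfin h4
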